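/- arXiv:2006.15269 — 15 statements merged into one kernel-verified Lean document; each statement's English description precedes it below -/
import Mathlib

section
/- Let I : [0,1]² → [0,1] be a fuzzy implication and define A_I(x,y) = inf{z ∈ [0,1] : I(x,z) ≥ y}. Then the following three statements are equivalent: (i) I is right-continuous in its second variable; (ii) A_I and I satisfy the residuation property, i.e., for all x, y, z ∈ [0,1], A_I(x,z) ≤ y if and only if z ≤ I(x,y); (iii) for all x, y ∈ [0,1] the infimum defining A_I is attained, i.e., A_I(x,y) = min{z ∈ [0,1] : I(x,z) ≥ y}. -/
/-!
For a monotone map `f` with `f ⊤ = ⊤`, attainment of all the infima `sInf {z | y ≤ f z}` says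
exactly that `y ↦ sInf {z | y ≤ f z}` is a lower adjoint of `f`. A set comes arbitrarily close to
its infimum from the right, so right-continuity of `f` forces attainment. Conversely, a lower
adjoint `l` of `f` gives `{z | f z < y} = Iio (l y)`, so `f` is upper semicontinuous, and a monotone
upper semicontinuous function is right-continuous.
-/

instance : Fact ((0:ℝ) ≤ 1) := ⟨zero_le_one⟩

/-- The operation `A_I(x,y) = inf {z ∈ [0,1] | I(x,z) ≥ y}`. -/
noncomputable def coresid (Imp : unitInterval → unitInterval → unitInterval)
    (x y : unitInterval) : unitInterval :=
  sInf {z : unitInterval | y ≤ Imp x z}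

open Set

section Galois

variable {α β : Type*} {l : β → α} {u : α → β}

theorem galoisConnection_iff_forall_isLeast [Preorder α] [Preorder β] (hu : Monotone u) :
    GaloisConnection l u ↔ ∀ y, IsLeast {z | y ≤ u z} (l y) :=
  ⟨fun gc _ => gc.isLeast_l, fun h y _ =>
    ⟨fun hle => (h y).1.trans (hu hle), fun hle => (h y).2 hle⟩⟩

theorem upperSemicontinuous_of_galoisConnection [LinearOrder α] [TopologicalSpace α]
    [ClosedIciTopology α] [LinearOrder β] (gc : GaloisConnection l u) :
    UpperSemicontinuous u := by
  intro z y hzy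
  filter_upwards [Iio_mem_nhds (gc.lt_iff_lt.2 hzy)] with w hw
  exact gc.lt_iff_lt.1 hw

end Galois

section RightContinuous

variable {α β : Type*} [TopologicalSpace α] [TopologicalSpace β] {f : α → β}

theorem continuousWithinAt_Ioi_of_monotone_of_upperSemicontinuousAt [Preorder α] [Preorder β]
    [OrderTopology β] {z : α} (hf : Monotone f) (husc : UpperSemicontinuousAt f z) :
    ContinuousWithinAt f (Ioi z) z := by
  refine tendsto_order.2 ⟨fun a ha => ?_, fun b hb => (husc b hb).filter_mono nhdsWithin_le_nhds⟩
  filter_upwards [self_mem_nhdsWithin] with w hw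
  exact ha.trans_le (hf (le_of_lt hw))

theorem isLeast_of_isGLB_of_continuousWithinAt_Ioi [LinearOrder α] [OrderTopology α] [Preorder β]
    [ClosedIciTopology β] {c : α} {y : β} (hc : IsGLB {z | y ≤ f z} c)
    (hne : {z | y ≤ f z}.Nonempty) (hf : ContinuousWithinAt f (Ioi c) c) :
    IsLeast {z | y ≤ f z} c :=
  ⟨ge_of_tendsto_of_frequently (continuousWithinAt_Ioi_iff_Ici.1 hf) (hc.frequently_mem hne), hc.1⟩

theorem forall_continuousWithinAt_Ioi_iff_forall_isLeast_sInf [CompleteLinearOrder α]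
    [OrderTopology α] [LinearOrder β] [OrderTop β] [OrderTopology β] (hf : Monotone f)
    (htop : f ⊤ = ⊤) :
    (∀ z, z ≠ ⊤ → ContinuousWithinAt f (Ioi z) z) ↔
      ∀ y, IsLeast {z | y ≤ f z} (sInf {z | y ≤ f z}) := by
  constructor
  · intro hcont y
    have htop_mem : y ≤ f ⊤ := htop ▸ le_top
    refine isLeast_of_isGLB_of_continuousWithinAt_Ioi (isGLB_sInf _) ⟨⊤, htop_mem⟩ ?_
    rcases eq_or_ne (sInf {z | y ≤ f z}) ⊤ with heq | hne
    · simp [heq, ContinuousWithinAt]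
    · exact hcont _ hne
  · intro hleast z _
    have gc := (galoisConnection_iff_forall_isLeast hf).2 hleast
    exact continuousWithinAt_Ioi_of_monotone_of_upperSemicontinuousAt hf
      (upperSemicontinuous_of_galoisConnection gc z)

end RightContinuous

theorem stmt1_general {ι α β : Type*} [CompleteLinearOrder α] [TopologicalSpace α]
    [OrderTopology α] [LinearOrder β] [OrderTop β] [TopologicalSpace β] [OrderTopology β]
    (I : ι → α → β) (hmono : ∀ x, Monotone (I x)) (htop : ∀ x, I x ⊤ = ⊤) :
    ((∀ x z, z ≠ ⊤ → ContinuousWithinAt (I x) (Ioi z) z)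
      ↔ (∀ x y z, sInf {w | z ≤ I x w} ≤ y ↔ z ≤ I x y))
    ∧ ((∀ x y z, sInf {w | z ≤ I x w} ≤ y ↔ z ≤ I x y)
      ↔ (∀ x y, IsLeast {z | y ≤ I x z} (sInf {z | y ≤ I x z}))) := by
  have resid_iff_attained : (∀ x y z, sInf {w | z ≤ I x w} ≤ y ↔ z ≤ I x y) ↔
      ∀ x y, IsLeast {z | y ≤ I x z} (sInf {z | y ≤ I x z}) :=
    forall_congr' fun x => forall_comm.trans (galoisConnection_iff_forall_isLeast (hmono x))
  have cont_iff_attained : (∀ x z, z ≠ ⊤ → ContinuousWithinAt (I x) (Ioi z) z) ↔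
      ∀ x y, IsLeast {z | y ≤ I x z} (sInf {z | y ≤ I x z}) :=
    forall_congr' fun x =>
      forall_continuousWithinAt_Ioi_iff_forall_isLeast_sInf (hmono x) (htop x)
  exact ⟨cont_iff_attained.trans resid_iff_attained.symm, resid_iff_attained⟩

/-- Lemma 3.2: for a fuzzy implication `I`, the following are equivalent:
(i) `I` is right-continuous in its second variable;
(ii) `A_I` and `I` satisfy the residuation property;
(iii) the infimum defining `A_I(x,y)` is attained (i.e. is a minimum). -/
theorem stmt1 (Imp : unitInterval → unitInterval → unitInterval)
    (hImono₁ : ∀ y : unitInterval, Antitone fun x => Imp x y)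
    (hImono₂ : ∀ x : unitInterval, Monotone (Imp x))
    (hI00 : Imp 0 0 = 1) (hI11 : Imp 1 1 = 1) (hI10 : Imp 1 0 = 0) :
    ((∀ (x z : unitInterval), z ≠ 1 → ContinuousWithinAt (Imp x) (Set.Ioi z) z)
      ↔ (∀ x y z : unitInterval, coresid Imp x z ≤ y ↔ z ≤ Imp x y))
    ∧ ((∀ x y z : unitInterval, coresid Imp x z ≤ y ↔ z ≤ Imp x y)
      ↔ (∀ x y : unitInterval, IsLeast {z : unitInterval | y ≤ Imp x z} (coresid Imp x y))) :=
  stmt1_general Imp hImono₂ fun x =>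
    top_le_iff.1 (hI11.ge.trans (hImono₁ 1 (unitInterval.le_one x)))
end

section
/- Let I : [0,1]² → [0,1] be a fuzzy implication satisfying I(1,y) < 1 for all y ∈ [0,1). Then the function A_I : [0,1]² → [0,1] defined by A_I(x,y) = inf{z ∈ [0,1] : I(x,z) ≥ y} is a binary aggregation function, i.e., A_I is nondecreasing in each variable and A_I(0,0) = 0 and A_I(1,1) = 1. -/
section LowerInverse

variable {β γ : Type*} [CompleteLattice β]

/-- The generalized lower inverse of `f`, sending `y` to the infimum of the points where `f` is at
least `y`, with value `⊤` if there are none. It is the lower adjoint of `f` when `f` preserves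
infima, and `coresid Imp x` is the generalized lower inverse of the partial map `Imp x`. -/
def lowerInverse [LE γ] (f : β → γ) (y : γ) : β :=
  sInf {z | y ≤ f z}

theorem monotone_lowerInverse [Preorder γ] (f : β → γ) : Monotone (lowerInverse f) :=
  fun _ _ hy => sInf_le_sInf fun _ hz => hy.trans hz

theorem antitone_lowerInverse [Preorder γ] : Antitone (lowerInverse : (β → γ) → γ → β) :=
  fun _ _ hfg _ => sInf_le_sInf fun z hz => hz.trans (hfg z)

@[simp]
theorem lowerInverse_bot [LE γ] [OrderBot γ] (f : β → γ) : lowerInverse f ⊥ = ⊥ := by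
  simp only [lowerInverse, bot_le, Set.ofPred_true, sInf_univ]

theorem lowerInverse_top_eq_top_iff [PartialOrder γ] [OrderTop γ] {f : β → γ} :
    lowerInverse f ⊤ = ⊤ ↔ ∀ z, f z = ⊤ → z = ⊤ := by
  simp only [lowerInverse, sInf_eq_top, Set.mem_ofPred_eq, top_le_iff]

end LowerInverse

theorem stmt2_general {α β γ : Type*} [Preorder α] [BoundedOrder α] [CompleteLattice β]
    [PartialOrder γ] [BoundedOrder γ] (I : α → β → γ)
    (hI : ∀ z, Antitone fun x => I x z) (hlt : ∀ z, z < ⊤ → I ⊤ z < ⊤) :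
    (∀ y, Monotone fun x => lowerInverse (I x) y)
    ∧ (∀ x, Monotone (lowerInverse (I x)))
    ∧ lowerInverse (I ⊥) ⊥ = ⊥ ∧ lowerInverse (I ⊤) ⊤ = ⊤ := by
  have top_of_eq_top : ∀ z, I ⊤ z = ⊤ → z = ⊤ := fun z hz =>
    by_contra fun hne => (hlt z (lt_top_iff_ne_top.mpr hne)).ne hz
  exact ⟨fun y _ _ hx => antitone_lowerInverse (fun z => hI z hx) y,
    fun x => monotone_lowerInverse (I x),
    lowerInverse_bot (I ⊥),
    lowerInverse_top_eq_top_iff.mpr top_of_eq_top⟩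

/-- Lemma 3.3: if the fuzzy implication `I` satisfies `I(1,y) < 1` for all `y ∈ [0,1)`,
then `A_I` is a binary aggregation function: nondecreasing in each variable with
`A_I(0,0) = 0` and `A_I(1,1) = 1`. -/
theorem stmt2 (Imp : unitInterval → unitInterval → unitInterval)
    (hImono₁ : ∀ y : unitInterval, Antitone fun x => Imp x y)
    (hImono₂ : ∀ x : unitInterval, Monotone (Imp x))
    (hI00 : Imp 0 0 = 1) (hI11 : Imp 1 1 = 1) (hI10 : Imp 1 0 = 0)
    (hlt : ∀ y : unitInterval, y < 1 → Imp 1 y < 1) :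
    (∀ y : unitInterval, Monotone fun x => coresid Imp x y)
    ∧ (∀ x : unitInterval, Monotone (coresid Imp x))
    ∧ coresid Imp 0 0 = 0 ∧ coresid Imp 1 1 = 1 :=
  stmt2_general Imp hImono₁ hlt
end

section
/- Let I : [0,1]² → [0,1] be a fuzzy implication that is right-continuous in its second variable, and define A_I(x,y) = inf{z ∈ [0,1] : I(x,z) ≥ y}. Then A_I preserves arbitrary suprema in its second variable: for every x ∈ [0,1] and every nonempty family (y_i)_{i ∈ S} of points of [0,1], A_I(x, sup_{i∈S} y_i) = sup_{i∈S} A_I(x, y_i); in particular A_I is left-continuous in its second variable. -/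
/-!
The map `A_I(x, ·)` is the candidate lower adjoint of `I(x, ·)` given by the adjoint functor
theorem for complete lattices. A monotone right-continuous map between linear orders preserves the
infima of nonempty sets, and `I(x, 1) = 1` takes care of the empty set, so `A_I(x, ·)` is a lower
adjoint. Lower adjoints preserve all suprema, and between complete linear orders such maps are
left-continuous.
-/

open Set Filter

section LowerResidual

variable {α β : Type*}

/-- The pointwise-infimum candidate for the lower adjoint of `g`; it is an adjoint only if `g`
preserves the infima involved. On `[0,1]`, `A_I(x, ·)` is the lower residual of `I(x, ·)`. -/
def lowerResidual [InfSet α] [LE β] (g : α → β) (y : β) : α :=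
  sInf {z | y ≤ g z}

lemma gc_lowerResidual [CompleteLattice α] [Preorder β] [OrderTop β] {g : α → β}
    (hg : RightOrdContinuous g) (htop : g ⊤ = ⊤) : GaloisConnection (lowerResidual g) g := by
  intro y z
  have hne : {z | y ≤ g z}.Nonempty := ⟨⊤, le_top.trans_eq htop.symm⟩
  have attained : y ≤ g (lowerResidual g y) :=
    (hg hne (isGLB_sInf _)).2 (forall_mem_image.2 fun _ hw ↦ hw)
  exact ⟨fun h ↦ attained.trans (hg.mono h), fun h ↦ sInf_le h⟩

lemma rightOrdContinuous_of_continuousWithinAt_Ioi [LinearOrder α] [TopologicalSpace α]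
    [OrderTopology α] [LinearOrder β] [TopologicalSpace β] [OrderTopology β] {g : α → β}
    (hg : Monotone g) (hrc : ∀ z, ¬IsMax z → ContinuousWithinAt g (Ioi z) z) :
    RightOrdContinuous g := by
  refine hg.rightOrdContinuous fun z ↦ continuousWithinAt_Ioi_iff_Ici.1 ?_
  by_cases hz : IsMax z
  · simp only [hz.Ioi_eq, ContinuousWithinAt, nhdsWithin_empty, tendsto_bot]
  · exact hrc z hz

theorem stmt3_general [CompleteLinearOrder α] [TopologicalSpace α] [OrderTopology α]
    [CompleteLinearOrder β] [TopologicalSpace β] [OrderTopology β] {g : α → β}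
    (hg : Monotone g) (htop : g ⊤ = ⊤)
    (hrc : ∀ z, z ≠ ⊤ → ContinuousWithinAt g (Ioi z) z) :
    (∀ (ι : Sort*) (f : ι → β), lowerResidual g (⨆ i, f i) = ⨆ i, lowerResidual g (f i))
    ∧ ∀ y, ContinuousWithinAt (lowerResidual g) (Iio y) y := by
  have hord : RightOrdContinuous g :=
    rightOrdContinuous_of_continuousWithinAt_Ioi hg fun z hz ↦ hrc z (mt isMax_iff_eq_top.2 hz)
  have gc : GaloisConnection (lowerResidual g) g := gc_lowerResidual hord htop
  exact ⟨fun _ _ ↦ gc.l_iSup,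
    fun _ ↦ gc.leftOrdContinuous.continuousWithinAt_Iic.mono Iio_subset_Iic_self⟩

end LowerResidual

/-- (From the proof of Theorem 3.4.)  If the fuzzy implication `I` is right-continuous in
its second variable, then `A_I` preserves arbitrary nonempty suprema in its second
variable; in particular `A_I` is left-continuous in its second variable. -/
theorem stmt3 (Imp : unitInterval → unitInterval → unitInterval)
    (hImono₁ : ∀ y : unitInterval, Antitone fun x => Imp x y)
    (hImono₂ : ∀ x : unitInterval, Monotone (Imp x))
    (hI00 : Imp 0 0 = 1) (hI11 : Imp 1 1 = 1) (hI10 : Imp 1 0 = 0)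
    (hrc : ∀ (x z : unitInterval), z ≠ 1 → ContinuousWithinAt (Imp x) (Set.Ioi z) z) :
    (∀ (x : unitInterval) (ι : Type) [Nonempty ι] (f : ι → unitInterval),
      coresid Imp x (⨆ i, f i) = ⨆ i, coresid Imp x (f i))
    ∧ (∀ (x z : unitInterval), z ≠ 0 → ContinuousWithinAt (coresid Imp x) (Set.Iio z) z) := by
  have residual (x : unitInterval) :=
    stmt3_general (hImono₂ x) (eq_top_mono (hImono₁ 1 le_top) hI11) (hrc x)
  exact ⟨fun x ι _ f ↦ (residual x).1 ι f, fun x z _ ↦ (residual x).2 z⟩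
end

section
/- Let I : [0,1]² → [0,1] be a fuzzy implication that is right-continuous in its second variable, and define A_I(x,y) = inf{z ∈ [0,1] : I(x,z) ≥ y}. Then I coincides with the residual operation of A_I: for all x, y ∈ [0,1], the set {z ∈ [0,1] : A_I(x,z) ≤ y} has a maximum and I(x,y) = max{z ∈ [0,1] : A_I(x,z) ≤ y}. -/
open Set

/-- The lower generalized inverse of `f`, the quantile function when `f` is a distribution function.
It is the only candidate for a lower adjoint of `f`, and it is `coresid Imp x` for `f = Imp x`. -/
def generalizedInverse {α β : Type*} [InfSet α] [LE β] (f : α → β) (z : β) : α :=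
  sInf {w | z ≤ f w}

theorem rightOrdContinuous_of_continuousWithinAt_Ici {α β : Type*}
    [LinearOrder α] [TopologicalSpace α] [OrderTopology α]
    [Preorder β] [TopologicalSpace β] [OrderClosedTopology β] {f : α → β}
    (hmono : Monotone f) (hf : ∀ y, ContinuousWithinAt f (Ici y) y) : RightOrdContinuous f :=
  fun s _ hs hy => hy.isGLB_of_tendsto (hmono.monotoneOn s) hs ((hf _).mono hy.1)

theorem le_apply_generalizedInverse {α β : Type*} [CompleteLattice α] [Preorder β] [OrderTop β]
    {f : α → β} (hf : RightOrdContinuous f) (htop : f ⊤ = ⊤) (z : β) :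
    z ≤ f (generalizedInverse f z) := by
  have hne : {w | z ≤ f w}.Nonempty := ⟨⊤, le_top.trans_eq htop.symm⟩
  exact (hf hne (isGLB_sInf _)).2 (forall_mem_image.2 fun _ hw => hw)

theorem gc_generalizedInverse {α β : Type*} [CompleteLattice α] [Preorder β] [OrderTop β]
    {f : α → β} (hf : RightOrdContinuous f) (htop : f ⊤ = ⊤) :
    GaloisConnection (generalizedInverse f) f :=
  fun z _ => ⟨fun h => (le_apply_generalizedInverse hf htop z).trans (hf.mono h),
    fun h => sInf_le h⟩

theorem stmt4_general {ι α β : Type*}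
    [CompleteLinearOrder α] [TopologicalSpace α] [OrderTopology α]
    [Preorder β] [OrderTop β] [TopologicalSpace β] [OrderClosedTopology β] (Imp : ι → α → β)
    (hmono : ∀ x, Monotone (Imp x)) (htop : ∀ x, Imp x ⊤ = ⊤)
    (hrc : ∀ x y, y ≠ ⊤ → ContinuousWithinAt (Imp x) (Ioi y) y) :
    ∀ x y, IsGreatest {z | generalizedInverse (Imp x) z ≤ y} (Imp x y) := by
  intro x y
  have hIci (w : α) : ContinuousWithinAt (Imp x) (Ici w) w := by
    rcases eq_or_ne w ⊤ with rfl | hw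
    · rw [Ici_top]
      exact continuousWithinAt_singleton
    · exact continuousWithinAt_Ioi_iff_Ici.1 (hrc x w hw)
  have hord := rightOrdContinuous_of_continuousWithinAt_Ici (hmono x) hIci
  exact (gc_generalizedInverse hord (htop x)).isGreatest_u

/-- Theorem 3.4: if a fuzzy implication `I` is right-continuous in its second variable,
then `I = I_{A_I}`: for all `x, y`, the set `{z | A_I(x,z) ≤ y}` has a maximum and
`I(x,y) = max {z | A_I(x,z) ≤ y}`. -/
theorem stmt4 (Imp : unitInterval → unitInterval → unitInterval)
    (hImono₁ : ∀ y : unitInterval, Antitone fun x => Imp x y)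
    (hImono₂ : ∀ x : unitInterval, Monotone (Imp x))
    (hI00 : Imp 0 0 = 1) (hI11 : Imp 1 1 = 1) (hI10 : Imp 1 0 = 0)
    (hrc : ∀ (x z : unitInterval), z ≠ 1 → ContinuousWithinAt (Imp x) (Set.Ioi z) z) :
    ∀ x y : unitInterval,
      IsGreatest {z : unitInterval | coresid Imp x z ≤ y} (Imp x y) :=
  stmt4_general Imp hImono₂ (fun _ => top_unique (hI11.ge.trans (hImono₁ 1 le_top))) hrc
end

section
/- Let I : [0,1]² → [0,1] be a fuzzy implication such that the function f(y) = I(1,y) is strictly increasing on [0,1], and let A_I(x,y) = inf{z ∈ [0,1] : I(x,z) ≥ y}. Let U and V be nonempty sets, D, D' fuzzy sets on U and B a fuzzy set on V, and define the ACRI output B'(y) = sup_{x ∈ U} A_I(D'(x), I(D(x), B(y))). If D' is normal, then B ⊆ B', i.e., B(y) ≤ B'(y) for all y ∈ V. -/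
/-- The operation `A_I` over a complete lattice of truth values; `coresid` is the case of the unit
interval. -/
def latticeCoresid {L : Type*} [CompleteLattice L] (I : L → L → L) (x y : L) : L :=
  sInf {z | y ≤ I x z}

/-- The ACRI output `B'` on an input `D'`, for the rule with premise `D` and conclusion `B`, with
fuzzy sets encoded as functions into a complete lattice. -/
def acriOutput {L U V : Type*} [CompleteLattice L] (I : L → L → L) (D D' : U → L) (B : V → L) :
    V → L :=
  fun v => ⨆ u, latticeCoresid I (D' u) (I (D u) (B v))

section

variable {L U V : Type*} [CompleteLattice L] {I : L → L → L}

theorem le_latticeCoresid_of_reflects_le {x y a : L} (hrefl : ∀ ⦃b c⦄, I x b ≤ I x c → b ≤ c)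
    (ha : I x a ≤ y) : a ≤ latticeCoresid I x y :=
  le_sInf fun _ hz => hrefl (ha.trans hz)

theorem latticeCoresid_le_acriOutput (D D' : U → L) (B : V → L) (u : U) (v : V) :
    latticeCoresid I (D' u) (I (D u) (B v)) ≤ acriOutput I D D' B v :=
  le_iSup (fun u => latticeCoresid I (D' u) (I (D u) (B v))) u

theorem stmt5_general (hanti : ∀ b, Antitone fun x => I x b)
    (hrefl : ∀ ⦃b c⦄, I ⊤ b ≤ I ⊤ c → b ≤ c) (D : U → L) {D' : U → L} (B : V → L)
    (hD' : ∃ u, D' u = ⊤) : B ≤ acriOutput I D D' B := by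
  intro v
  obtain ⟨u, hu⟩ := hD'
  have himp : I ⊤ (B v) ≤ I (D u) (B v) := hanti (B v) le_top
  calc
    B v ≤ latticeCoresid I ⊤ (I (D u) (B v)) := le_latticeCoresid_of_reflects_le hrefl himp
    _ = latticeCoresid I (D' u) (I (D u) (B v)) := by rw [hu]
    _ ≤ acriOutput I D D' B v := latticeCoresid_le_acriOutput D D' B u v

end

/-- Theorem 4.2(i): if `I` is a fuzzy implication with `f(y) = I(1,y)` strictly
increasing, `D'` is normal, then the ACRI output
`B'(y) = sup_x A_I(D'(x), I(D(x), B(y)))` satisfies (GMP1): `B ⊆ B'`. -/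
theorem stmt5 (Imp : unitInterval → unitInterval → unitInterval)
    (hImono₁ : ∀ y : unitInterval, Antitone fun x => Imp x y)
    (hImono₂ : ∀ x : unitInterval, Monotone (Imp x))
    (hI00 : Imp 0 0 = 1) (hI11 : Imp 1 1 = 1) (hI10 : Imp 1 0 = 0)
    (hstrict : StrictMono fun y : unitInterval => Imp 1 y)
    (U V : Type) [Nonempty U] [Nonempty V]
    (D D' : U → unitInterval) (B : V → unitInterval)
    (hD' : ∃ x₀ : U, D' x₀ = 1) :
    ∀ y : V, B y ≤ ⨆ x : U, coresid Imp (D' x) (Imp (D x) (B y)) :=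
  stmt5_general hImono₁ (fun _ _ => hstrict.le_iff_le.mp) D B hD'
end

section
/- Let I : [0,1]² → [0,1] be a fuzzy implication such that the function f(y) = I(1,y) is strictly increasing on [0,1], and let A_I(x,y) = inf{z ∈ [0,1] : I(x,z) ≥ y}. Let U and V be nonempty sets, D a fuzzy set on U with complement D^C(x) = 1 − D(x), and B a fuzzy set on V. If D^C is normal, then the ACRI output with input D^C satisfies B'(y) = sup_{x ∈ U} A_I(D^C(x), I(D(x), B(y))) = 1 for all y ∈ V. -/
/-! The supremum is attained at any `x₀` with `D^C(x₀) = 1`: there `D(x₀) = 0`, so the term is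
`A_I(1, I(0, B(y))) = A_I(1, 1)`, the infimum of `{z | I(1,z) = 1}`, which contains no `z < 1`. -/

section Coresid

variable {Imp : unitInterval → unitInterval → unitInterval}

theorem coresid_eq_one_iff {x y : unitInterval} :
    coresid Imp x y = 1 ↔ ∀ z, y ≤ Imp x z → z = 1 :=
  sInf_eq_top

theorem coresid_one_one_eq_one_iff :
    coresid Imp 1 1 = 1 ↔ ∀ z, Imp 1 z = 1 → z = 1 :=
  coresid_eq_one_iff.trans <| forall_congr' fun _ => imp_congr_left top_le_iff

end Coresid

theorem eq_top_of_monotone_of_map_bot_eq_top {α β : Type*} [Preorder α] [OrderBot α]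
    [PartialOrder β] [OrderTop β] {f : α → β}
    (hf : Monotone f) (hbot : f ⊥ = ⊤) (a : α) : f a = ⊤ :=
  top_unique (hbot.ge.trans (hf bot_le))

theorem stmt6_general {Imp : unitInterval → unitInterval → unitInterval}
    (hI0 : ∀ z, Imp 0 z = 1) (hI1 : ∀ z, Imp 1 z = 1 → z = 1)
    {U V : Type*} {D : U → unitInterval} (B : V → unitInterval)
    (hDC : ∃ x₀ : U, unitInterval.symm (D x₀) = 1) (y : V) :
    (⨆ x : U, coresid Imp (unitInterval.symm (D x)) (Imp (D x) (B y))) = 1 := by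
  obtain ⟨x₀, hx₀⟩ := hDC
  have hD : D x₀ = 0 := unitInterval.symm_eq_one.mp hx₀
  have hterm : coresid Imp (unitInterval.symm (D x₀)) (Imp (D x₀) (B y)) = 1 := by
    rw [hx₀, hD, hI0, coresid_one_one_eq_one_iff.mpr hI1]
  exact top_unique (hterm.ge.trans (le_iSup_of_le x₀ le_rfl))

/-- Theorem 4.2(iii): if `I` is a fuzzy implication with `f(y) = I(1,y)` strictly
increasing and the complement `D^C` is normal, then the ACRI output with input `D^C`
satisfies (GMP3): `B'(y) = sup_x A_I(D^C(x), I(D(x), B(y))) = 1` for all `y`. -/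
theorem stmt6 (Imp : unitInterval → unitInterval → unitInterval)
    (hImono₁ : ∀ y : unitInterval, Antitone fun x => Imp x y)
    (hImono₂ : ∀ x : unitInterval, Monotone (Imp x))
    (hI00 : Imp 0 0 = 1) (hI11 : Imp 1 1 = 1) (hI10 : Imp 1 0 = 0)
    (hstrict : StrictMono fun y : unitInterval => Imp 1 y)
    (U V : Type) [Nonempty U] [Nonempty V]
    (D : U → unitInterval) (B : V → unitInterval)
    (hDC : ∃ x₀ : U, unitInterval.symm (D x₀) = 1) :
    ∀ y : V, (⨆ x : U, coresid Imp (unitInterval.symm (D x)) (Imp (D x) (B y))) = 1 := by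
  exact stmt6_general (eq_top_of_monotone_of_map_bot_eq_top (hImono₂ 0) hI00)
    (fun _ hz => hstrict.injective (hz.trans hI11.symm)) B hDC
end

section
/- Let A : [0,1]² → [0,1] be a binary aggregation function that is left-continuous in its second variable, has 1 as a left neutral element (A(1,x) = x for all x ∈ [0,1]), and satisfies A(0,y) = 0 for all y ∈ [0,1). Let I_A(x,y) = sup{z ∈ [0,1] : A(x,z) ≤ y}. Let U, V be nonempty sets, D, D', D'' fuzzy sets on U and B a fuzzy set on V, and define B'(y) = sup_{x ∈ U} A(D'(x), I_A(D(x), B(y))) (and B'' analogously from D''). Then: (GMP1) if D' is normal then B(y) ≤ B'(y) for all y; (GMP2) if D' ⊆ D'' then B' ⊆ B''; (GMP3) if D' = D^C (where D^C(x) = 1 − D(x)) and D^C is normal then B'(y) = 1 for all y; (GMP4) if D' = D and D is normal then B' = B. -/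
/-- The residual operation `I_A(x,y) = sup {z ∈ [0,1] | A(x,z) ≤ y}`. -/
noncomputable def resid (A : unitInterval → unitInterval → unitInterval)
    (x y : unitInterval) : unitInterval :=
  sSup {z : unitInterval | A x z ≤ y}

/-- The residual `y ↦ sup {z | f z ≤ y}` of a map `f`, so that `I_A(x, ·)` is the residual of
`A(x, ·)`. -/
def residualMap {β γ : Type*} [SupSet β] [LE γ] (f : β → γ) (y : γ) : β :=
  sSup {z | f z ≤ y}

section ResidualMap

variable {β γ : Type*} {f : β → γ}

theorem le_residualMap [CompleteLattice β] [LE γ] {y : γ} {z : β} (h : f z ≤ y) :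
    z ≤ residualMap f y :=
  le_sSup h

theorem residualMap_eq_top [CompleteLinearOrder β] [DenselyOrdered β] [LE γ] {y : γ}
    (h : ∀ z < ⊤, f z ≤ y) : residualMap f y = ⊤ :=
  top_le_iff.1 <| le_of_forall_lt_imp_le_of_dense fun z hz => le_residualMap (h z hz)

theorem gc_residualMap [CompleteLinearOrder β] [TopologicalSpace β] [OrderTopology β]
    [CompleteLinearOrder γ] [TopologicalSpace γ] [OrderClosedTopology γ]
    (hf : Monotone f) (hbot : f ⊥ = ⊥)
    (hlc : ∀ z, z ≠ ⊥ → ContinuousWithinAt f (Set.Iio z) z) :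
    GaloisConnection f (residualMap f) := by
  refine fun z y => ⟨le_residualMap, fun hz => (hf hz).trans ?_⟩
  have hIio : ContinuousWithinAt f (Set.Iio (residualMap f y)) (residualMap f y) := by
    obtain h | h := eq_or_ne (residualMap f y) ⊥
    · simp only [h, Set.Iio_bot, ContinuousWithinAt, nhdsWithin_empty, Filter.tendsto_bot]
    · exact hlc _ h
  have hcont : ContinuousWithinAt f {w | f w ≤ y} (residualMap f y) :=
    (continuousWithinAt_Iio_iff_Iic.1 hIio).mono fun _ => le_residualMap
  calc f (residualMap f y) = sSup (f '' {w | f w ≤ y}) :=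
        (hf.monotoneOn _).map_sSup_of_continuousWithinAt hcont hbot
    _ ≤ y := sSup_le <| Set.forall_mem_image.2 fun _ hw => hw

end ResidualMap

/-- The conclusion `sup_x A(D'(x), I_A(D(x), b))` which the ACRI method draws from the rule
"if `D` then `b`" and the observation `D'`; applied pointwise to `B`, it gives the paper's `B'`. -/
def acri {α β U : Type*} [SupSet β] [LE β] (A : α → β → β) (D D' : U → α) (b : β) : β :=
  ⨆ x, A (D' x) (residualMap (A (D x)) b)

section ACRI

variable {α β U : Type*} [Preorder α] {A : α → β → β} {D D' D'' : U → α}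

theorem acri_mono [CompleteLattice β] (hAmono : ∀ y, Monotone fun x => A x y) (h : D' ≤ D'')
    (b : β) : acri A D D' b ≤ acri A D D'' b :=
  iSup_mono fun x => hAmono _ (h x)

variable [OrderTop α]

theorem apply_le_right [Preorder β] (hAmono : ∀ y, Monotone fun x => A x y)
    (hneut : ∀ y, A ⊤ y = y) (x : α) (y : β) : A x y ≤ y :=
  (hAmono y le_top).trans_eq (hneut y)

theorem residualMap_le_acri [CompleteLattice β] (hneut : ∀ y, A ⊤ y = y) {x₀ : U}
    (hx₀ : D' x₀ = ⊤) (b : β) : residualMap (A (D x₀)) b ≤ acri A D D' b :=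
  le_iSup_of_le x₀ (by rw [hx₀, hneut])

theorem le_acri [CompleteLattice β] (hAmono : ∀ y, Monotone fun x => A x y)
    (hneut : ∀ y, A ⊤ y = y) (hD' : ∃ x₀, D' x₀ = ⊤) (b : β) : b ≤ acri A D D' b := by
  obtain ⟨x₀, hx₀⟩ := hD'
  calc b ≤ residualMap (A (D x₀)) b := le_residualMap (apply_le_right hAmono hneut _ b)
    _ ≤ acri A D D' b := residualMap_le_acri hneut hx₀ b

theorem acri_eq_top [OrderBot α] [CompleteLinearOrder β] [DenselyOrdered β]
    (hneut : ∀ y, A ⊤ y = y) (hzero : ∀ y < ⊤, A ⊥ y = ⊥)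
    (hDD' : ∃ x₀, D x₀ = ⊥ ∧ D' x₀ = ⊤) (b : β) : acri A D D' b = ⊤ := by
  obtain ⟨x₀, hDx₀, hD'x₀⟩ := hDD'
  have hres : residualMap (A (D x₀)) b = ⊤ :=
    residualMap_eq_top fun z hz => by simp only [hDx₀, hzero z hz, bot_le]
  exact top_le_iff.1 <| hres.ge.trans (residualMap_le_acri hneut hD'x₀ b)

theorem acri_self_le [CompleteLinearOrder β] [TopologicalSpace β] [OrderTopology β]
    (hAmono₁ : ∀ y, Monotone fun x => A x y) (hAmono₂ : ∀ x, Monotone (A x))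
    (hlc : ∀ x z, z ≠ ⊥ → ContinuousWithinAt (A x) (Set.Iio z) z)
    (hneut : ∀ y, A ⊤ y = y) (b : β) : acri A D D b ≤ b :=
  iSup_le fun x =>
    have hbot : A (D x) ⊥ = ⊥ := le_bot_iff.1 (apply_le_right hAmono₁ hneut _ ⊥)
    (gc_residualMap (hAmono₂ _) hbot (hlc _)).l_u_le b

end ACRI

theorem stmt8_general {α β U V : Type*} [Preorder α] [BoundedOrder α] [CompleteLinearOrder β]
    [DenselyOrdered β] [TopologicalSpace β] [OrderTopology β] {A : α → β → β}
    (hAmono₁ : ∀ y, Monotone fun x => A x y) (hAmono₂ : ∀ x, Monotone (A x))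
    (hlc : ∀ x z, z ≠ ⊥ → ContinuousWithinAt (A x) (Set.Iio z) z)
    (hneut : ∀ y, A ⊤ y = y) (hzero : ∀ y < ⊤, A ⊥ y = ⊥)
    {neg : α → α} (hneg : ∀ a, neg a = ⊤ → a = ⊥) (D D' D'' : U → α) (B : V → β) :
    ((∃ x₀, D' x₀ = ⊤) → ∀ y, B y ≤ acri A D D' (B y))
    ∧ (D' ≤ D'' → ∀ y, acri A D D' (B y) ≤ acri A D D'' (B y))
    ∧ ((D' = fun x => neg (D x)) → (∃ x₀, D' x₀ = ⊤) → ∀ y, acri A D D' (B y) = ⊤)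
    ∧ (D' = D → (∃ x₀, D x₀ = ⊤) → ∀ y, acri A D D' (B y) = B y) := by
  refine ⟨fun hD' y => le_acri hAmono₁ hneut hD' (B y), fun h y => acri_mono hAmono₁ h (B y),
    ?_, ?_⟩
  · rintro rfl ⟨x₀, hx₀⟩ y
    exact acri_eq_top hneut hzero ⟨x₀, hneg _ hx₀, hx₀⟩ (B y)
  · rintro rfl hD y
    exact (acri_self_le hAmono₁ hAmono₂ hlc hneut (B y)).antisymm (le_acri hAmono₁ hneut hD (B y))

/-- Theorem 4.6: let `A` be an aggregation function that is left-continuous in the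
second variable, has `1` as a left neutral element and satisfies `A(0,y) = 0` for
`y < 1`.  Then the ACRI method built from `A` and `I_A` satisfies (GMP1)–(GMP4). -/
theorem stmt8 (A : unitInterval → unitInterval → unitInterval)
    (hAmono₁ : ∀ y : unitInterval, Monotone fun x => A x y)
    (hAmono₂ : ∀ x : unitInterval, Monotone (A x))
    (hA00 : A 0 0 = 0) (hA11 : A 1 1 = 1)
    (hlc : ∀ (x z : unitInterval), z ≠ 0 → ContinuousWithinAt (A x) (Set.Iio z) z)
    (hneut : ∀ x : unitInterval, A 1 x = x)
    (hzero : ∀ y : unitInterval, y < 1 → A 0 y = 0)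
    (U V : Type) [Nonempty U] [Nonempty V]
    (D D' D'' : U → unitInterval) (B : V → unitInterval) :
    -- (GMP1)
    ((∃ x₀ : U, D' x₀ = 1) →
      ∀ y : V, B y ≤ ⨆ x : U, A (D' x) (resid A (D x) (B y)))
    -- (GMP2)
    ∧ ((∀ x : U, D' x ≤ D'' x) →
      ∀ y : V, (⨆ x : U, A (D' x) (resid A (D x) (B y)))
        ≤ ⨆ x : U, A (D'' x) (resid A (D x) (B y)))
    -- (GMP3)
    ∧ ((D' = fun x => unitInterval.symm (D x)) → (∃ x₀ : U, D' x₀ = 1) →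
      ∀ y : V, (⨆ x : U, A (D' x) (resid A (D x) (B y))) = 1)
    -- (GMP4)
    ∧ (D' = D → (∃ x₀ : U, D x₀ = 1) →
      ∀ y : V, (⨆ x : U, A (D' x) (resid A (D x) (B y))) = B y) :=
  stmt8_general hAmono₁ hAmono₂ hlc hneut hzero (fun _ => unitInterval.symm_eq_one.1) D D' D'' B
end

section
/- Let U, V be nonempty sets and x₀ ∈ U. Let m ≥ 3 and let D_1, …, D_m be fuzzy sets on U such that for every x ∈ U there exists j with D_j(x) = 0 (as holds when the antecedent fuzzy sets of a complete fuzzy rule base with more than two rules form a Ruspini partition). Let B_1, …, B_m be fuzzy sets on V, let T be a t-norm, let A be a binary aggregation function having 0 as an annihilator (A(0,x) = A(x,0) = 0 for all x), let 𝒜 be an m-ary aggregation function having 0 as an annihilator (𝒜(y_1,…,y_m) = 0 whenever some y_j = 0), and let D' be the crisp singleton at x₀ (D'(x₀) = 1 and D'(x) = 0 for x ≠ x₀). Then both inference outputs vanish identically: B'_FITA(y) = 𝒜( sup_{x∈U} A(D'(x), T(D_1(x), B_1(y))), …, sup_{x∈U} A(D'(x), T(D_m(x), B_m(y))) ) = 0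 and B'_FATI(y) = sup_{x∈U} A(D'(x), 𝒜(T(D_1(x), B_1(y)), …, T(D_m(x), B_m(y)))) = 0 for all y ∈ V. -/
/-! Some rule `j` has an antecedent vanishing at `x₀`, so at each point the singleton input or
the antecedent of `j` is zero. Hence rule `j` infers the zero fuzzy set, which annihilates the FITA
aggregation. In the FATI output every term of the supremum is zero: off `x₀` because of the input,
and at `x₀` because rule `j` already annihilates the aggregated relation there. -/

theorem eq_bot_of_monotone_of_map_top_eq_bot {α β : Type*} [Preorder α] [OrderTop α]
    [PartialOrder β] [OrderBot β] {f : α → β} (hf : Monotone f) (htop : f ⊤ = ⊥) (a : α) :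
    f a = ⊥ :=
  le_bot_iff.1 ((hf le_top).trans_eq htop)

theorem exists_forall_eq_bot_or_eq_bot_of_singleton {ι U L : Type*} [Bot L] {D : ι → U → L}
    {D' : U → L} {x₀ : U} (hD : ∃ j, D j x₀ = ⊥) (hD' : ∀ x, x ≠ x₀ → D' x = ⊥) :
    ∃ j, ∀ x, D' x = ⊥ ∨ D j x = ⊥ := by
  obtain ⟨j, hj⟩ := hD
  refine ⟨j, fun x => ?_⟩
  obtain rfl | hx := eq_or_ne x x₀
  · exact .inr hj
  · exact .inl (hD' x hx)

section Inference

variable {ι U V L : Type*} [CompleteLattice L]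

/-- The output of FITA (first infer, then aggregate) inference at `y`, for lattice-valued fuzzy
sets: each rule `D j ⟶ B j`, interpreted by `T`, is composed with the input `D'` along `A`, and the
conclusions are aggregated by `Am`. -/
def fitaOutput (A T : L → L → L) (Am : (ι → L) → L) (D : ι → U → L) (B : ι → V → L)
    (D' : U → L) (y : V) : L :=
  Am fun j => ⨆ x, A (D' x) (T (D j x) (B j y))

/-- The output of FATI (first aggregate, then infer) inference at `y`, for lattice-valued fuzzy
sets: the rules `D j ⟶ B j`, interpreted by `T`, are aggregated by `Am` into one fuzzy relation,
with which the input `D'` is then composed along `A`. -/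
def fatiOutput (A T : L → L → L) (Am : (ι → L) → L) (D : ι → U → L) (B : ι → V → L)
    (D' : U → L) (y : V) : L :=
  ⨆ x, A (D' x) (Am fun j => T (D j x) (B j y))

variable {A T : L → L → L} {Am : (ι → L) → L} {D : ι → U → L} {D' : U → L}

theorem fitaOutput_eq_bot (hT : ∀ b, T ⊥ b = ⊥) (hA : ∀ a, A ⊥ a = ⊥ ∧ A a ⊥ = ⊥)
    (hAm : ∀ v : ι → L, (∃ j, v j = ⊥) → Am v = ⊥)
    (hD : ∃ j, ∀ x, D' x = ⊥ ∨ D j x = ⊥) (B : ι → V → L) (y : V) :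
    fitaOutput A T Am D B D' y = ⊥ := by
  obtain ⟨j, hj⟩ := hD
  refine hAm _ ⟨j, iSup_eq_bot.2 fun x => ?_⟩
  rcases hj x with hinput | hantecedent
  · rw [hinput, (hA _).1]
  · rw [hantecedent, hT, (hA _).2]

theorem fatiOutput_eq_bot (hT : ∀ b, T ⊥ b = ⊥) (hA : ∀ a, A ⊥ a = ⊥ ∧ A a ⊥ = ⊥)
    (hAm : ∀ v : ι → L, (∃ j, v j = ⊥) → Am v = ⊥)
    (hD : ∀ x, D' x = ⊥ ∨ ∃ j, D j x = ⊥) (B : ι → V → L) (y : V) :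
    fatiOutput A T Am D B D' y = ⊥ := by
  refine iSup_eq_bot.2 fun x => ?_
  rcases hD x with hinput | ⟨j, hantecedent⟩
  · rw [hinput, (hA _).1]
  · rw [hAm _ ⟨j, by rw [hantecedent, hT]⟩, (hA _).2]

theorem stmt10_general (hT : ∀ b, T ⊥ b = ⊥) (hA : ∀ a, A ⊥ a = ⊥ ∧ A a ⊥ = ⊥)
    (hAm : ∀ v : ι → L, (∃ j, v j = ⊥) → Am v = ⊥)
    (hD : ∃ j, ∀ x, D' x = ⊥ ∨ D j x = ⊥) (B : ι → V → L) :
    (∀ y, fitaOutput A T Am D B D' y = ⊥) ∧ ∀ y, fatiOutput A T Am D B D' y = ⊥ :=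
  ⟨fitaOutput_eq_bot hT hA hAm hD B,
    fatiOutput_eq_bot hT hA hAm (fun x => hD.elim fun j hj => (hj x).imp_right (⟨j, ·⟩)) B⟩

end Inference

/-- Lemma 4.8: with more than two rules whose antecedents always vanish somewhere
(as for a complete Ruspini partition), a t-norm `T` interpreting the rules, and
aggregation functions `A`, `𝒜` both having annihilator `0`, for a crisp singleton
input both the FITA and FATI outputs are identically `0`. -/
theorem stmt10 (U V : Type) [Nonempty U] [Nonempty V] (x₀ : U)
    (m : ℕ) (hm : 3 ≤ m)
    (D : Fin m → U → unitInterval) (hD : ∀ x : U, ∃ j : Fin m, D j x = 0)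
    (B : Fin m → V → unitInterval)
    -- `T` is a t-norm
    (T : unitInterval → unitInterval → unitInterval)
    (hTcomm : ∀ x y : unitInterval, T x y = T y x)
    (hTassoc : ∀ x y z : unitInterval, T x (T y z) = T (T x y) z)
    (hTmono₁ : ∀ y : unitInterval, Monotone fun x => T x y)
    (hTmono₂ : ∀ x : unitInterval, Monotone (T x))
    (hTneut : ∀ x : unitInterval, T x 1 = x)
    -- `A` is a binary aggregation function with annihilator `0`
    (A : unitInterval → unitInterval → unitInterval)
    (hAmono₁ : ∀ y : unitInterval, Monotone fun x => A x y)
    (hAmono₂ : ∀ x : unitInterval, Monotone (A x))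
    (hA00 : A 0 0 = 0) (hA11 : A 1 1 = 1)
    (hAann : ∀ x : unitInterval, A 0 x = 0 ∧ A x 0 = 0)
    -- `𝒜` is an `m`-ary aggregation function with annihilator `0`
    (Am : (Fin m → unitInterval) → unitInterval)
    (hAmmono : ∀ v w : Fin m → unitInterval, (∀ j, v j ≤ w j) → Am v ≤ Am w)
    (hAm0 : Am (fun _ => 0) = 0) (hAm1 : Am (fun _ => 1) = 1)
    (hAmann : ∀ v : Fin m → unitInterval, (∃ j, v j = 0) → Am v = 0)
    -- `D'` is the crisp singleton at `x₀`
    (D' : U → unitInterval) (hD'1 : D' x₀ = 1) (hD'0 : ∀ x : U, x ≠ x₀ → D' x = 0) :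
    (∀ y : V, Am (fun j => ⨆ x : U, A (D' x) (T (D j x) (B j y))) = 0)
    ∧ (∀ y : V, (⨆ x : U, A (D' x) (Am (fun j => T (D j x) (B j y)))) = 0) :=
  -- `0` and `1` of the unit interval are `⊥` and `⊤` definitionally.
  stmt10_general (eq_bot_of_monotone_of_map_top_eq_bot (hTmono₂ 0) (hTneut 0)) hAann hAmann
    (exists_forall_eq_bot_or_eq_bot_of_singleton (hD x₀) hD'0) B
end

section
/- Let U be a nonempty set, S a similarity measure on U, A : [0,1]² → [0,1] a binary aggregation function having 1 as a left neutral element (A(1,x) = x for all x), and I a fuzzy implication satisfying (NP) (I(1,y) = y for all y). Let D, D' be fuzzy sets on U with D normal, and B a fuzzy set on a nonempty set V. Then the inferred conclusion B'_1(y) = sup_{x ∈ U} I(S(D,D'), A(D(x), B(y))) satisfies B ⊆ B'_1, i.e., B(y) ≤ B'_1(y) for all y ∈ V. -/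
/-- A similarity measure on the fuzzy sets of a universe `U` (Definition 2.14). -/
structure SimilarityMeasure (U : Type) where
  S : (U → unitInterval) → (U → unitInterval) → unitInterval
  symm : ∀ D D' : U → unitInterval, S D D' = S D' D
  eq_one_iff : ∀ D D' : U → unitInterval, S D D' = 1 ↔ D = D'
  eq_zero : ∀ D D' : U → unitInterval, S D D' = 0 → ∀ x : U, min (D x) (D' x) = 0
  le_min : ∀ D D' D'' : U → unitInterval, (∀ x, D x ≤ D' x) → (∀ x, D' x ≤ D'' x) →
    S D D'' ≤ min (S D D') (S D' D'')

theorem le_imp_of_antitone_of_top_imp {α β : Type*} [Preorder α] [OrderTop α] [Preorder β]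
    {Imp : α → β → β} (hanti : ∀ y, Antitone fun x => Imp x y) (htop : ∀ y, Imp ⊤ y = y)
    (s : α) (y : β) : y ≤ Imp s y :=
  calc
    y = Imp ⊤ y := (htop y).symm
    _ ≤ Imp s y := hanti y le_top

theorem stmt11_general {U V L : Type*} [CompleteLattice L] {A Imp : L → L → L}
    (hneut : ∀ x, A ⊤ x = x) (hanti : ∀ y, Antitone fun x => Imp x y)
    (hNP : ∀ y, Imp ⊤ y = y) (s : L) {D : U → L} (hD : ∃ x₀, D x₀ = ⊤) (B : V → L) (y : V) :
    B y ≤ ⨆ x, Imp s (A (D x) (B y)) := by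
  obtain ⟨x₀, hx₀⟩ := hD
  calc
    B y ≤ Imp s (B y) := le_imp_of_antitone_of_top_imp hanti hNP s (B y)
    _ = Imp s (A (D x₀) (B y)) := by rw [hx₀, hneut]
    _ ≤ ⨆ x, Imp s (A (D x) (B y)) := le_iSup (fun x => Imp s (A (D x) (B y))) x₀

/-- Lemma 5.1(i): if `A` has left neutral element `1`, `I` satisfies (NP) and `D` is
normal, then `B ⊆ B'_1` where `B'_1(y) = sup_x I(S(D,D'), A(D(x),B(y)))`. -/
theorem stmt11 (U : Type) [Nonempty U] (S : SimilarityMeasure U)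
    (A : unitInterval → unitInterval → unitInterval)
    (hAmono₁ : ∀ y : unitInterval, Monotone fun x => A x y)
    (hAmono₂ : ∀ x : unitInterval, Monotone (A x))
    (hA00 : A 0 0 = 0) (hA11 : A 1 1 = 1)
    (hneut : ∀ x : unitInterval, A 1 x = x)
    (Imp : unitInterval → unitInterval → unitInterval)
    (hImono₁ : ∀ y : unitInterval, Antitone fun x => Imp x y)
    (hImono₂ : ∀ x : unitInterval, Monotone (Imp x))
    (hI00 : Imp 0 0 = 1) (hI11 : Imp 1 1 = 1) (hI10 : Imp 1 0 = 0)
    (hNP : ∀ y : unitInterval, Imp 1 y = y)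
    (D D' : U → unitInterval) (hD : ∃ x₀ : U, D x₀ = 1)
    (V : Type) [Nonempty V] (B : V → unitInterval) :
    ∀ y : V, B y ≤ ⨆ x : U, Imp (S.S D D') (A (D x) (B y)) :=
  stmt11_general hneut hImono₁ hNP (S.S D D') hD B
end

section
/- Let U be a nonempty set, S a similarity measure on U, and I a fuzzy implication that is right-continuous in its second variable and satisfies (NP) (I(1,y) = y for all y). Let D, D' be fuzzy sets on U with D normal, and B a fuzzy set on a nonempty set V. Then the inferred conclusion B'_2(y) = inf_{x ∈ U} I(S(D,D'), I(D(x), B(y))) satisfies B ⊆ B'_2, i.e., B(y) ≤ B'_2(y) for all y ∈ V. -/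
theorem le_apply_of_antitone_of_le_apply_top {α β : Type*} [Preorder α] [OrderTop α]
    [Preorder β] {Imp : α → β → β} {b : β} (hImp : Antitone fun a => Imp a b) (hTop : b ≤ Imp ⊤ b)
    (a : α) : b ≤ Imp a b :=
  hTop.trans (hImp le_top)

theorem stmt12_general {α β U V : Type*} [Preorder α] [OrderTop α] [CompleteLattice β]
    {Imp : α → β → β} (hImp : ∀ b, Antitone fun a => Imp a b) (hTop : ∀ b, b ≤ Imp ⊤ b)
    (s : α) (D : U → α) (B : V → β) (y : V) :
    B y ≤ ⨅ x : U, Imp s (Imp (D x) (B y)) := by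
  have le_imp (a : α) (b : β) : b ≤ Imp a b :=
    le_apply_of_antitone_of_le_apply_top (hImp b) (hTop b) a
  exact le_iInf fun x => (le_imp (D x) (B y)).trans (le_imp s _)

/-- Lemma 5.1(ii): if `I` is right-continuous in its second variable, satisfies (NP),
and `D` is normal, then `B ⊆ B'_2` where `B'_2(y) = inf_x I(S(D,D'), I(D(x),B(y)))`. -/
theorem stmt12 (U : Type) [Nonempty U] (S : SimilarityMeasure U)
    (Imp : unitInterval → unitInterval → unitInterval)
    (hImono₁ : ∀ y : unitInterval, Antitone fun x => Imp x y)
    (hImono₂ : ∀ x : unitInterval, Monotone (Imp x))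
    (hI00 : Imp 0 0 = 1) (hI11 : Imp 1 1 = 1) (hI10 : Imp 1 0 = 0)
    (hrc : ∀ (x z : unitInterval), z ≠ 1 → ContinuousWithinAt (Imp x) (Set.Ioi z) z)
    (hNP : ∀ y : unitInterval, Imp 1 y = y)
    (D D' : U → unitInterval) (hD : ∃ x₀ : U, D x₀ = 1)
    (V : Type) [Nonempty V] (B : V → unitInterval) :
    ∀ y : V, B y ≤ ⨅ x : U, Imp (S.S D D') (Imp (D x) (B y)) :=
  stmt12_general hImono₁ (fun b => (hNP b).ge) (S.S D D') D B
end

section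
/- Let U, V be nonempty sets, S_U a similarity measure on U and S_V a similarity measure on V. Let I be a fuzzy implication that is right-continuous in its second variable and satisfies (NP) (I(1,y) = y for all y), and let A be a binary aggregation function having 1 as a left neutral element (A(1,x) = x for all x). Let D be a normal fuzzy set on U, B a fuzzy set on V, and let D', D'' be fuzzy sets on U with S_U(D,D') ≤ S_U(D,D''). Define B'_1(y) = sup_{x∈U} I(S_U(D,D'), A(D(x), B(y))) and B''_1(y) = sup_{x∈U} I(S_U(D,D''), A(D(x), B(y))), and similarly B'_2(y) = inf_{x∈U} I(S_U(D,D'), I(D(x), B(y))) and B''_2(y) = inf_{x∈U} I(S_U(D,D''), I(D(x), B(y))). Then S_V(B, B'_1) ≤ S_V(B, B''_1) and S_V(B, B'_2) ≤ S_V(B, B''_2). -/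
section Inference

variable {U V α β L : Type*}

/-- The similarity-based output `B'₁` as a function of the similarity degree `s`, for an arbitrary
fuzzy relation `R` on `U × V` in place of `A (D x) (B y)`. -/
def supInference [SupSet L] (I : α → β → L) (R : U → V → β) (s : α) : V → L :=
  fun y => ⨆ x, I s (R x y)

/-- The similarity-based output `B'₂` as a function of the similarity degree `s`, for an arbitrary
fuzzy relation `R` on `U × V` in place of `I (D x) (B y)`. -/
def infInference [InfSet L] (I : α → β → L) (R : U → V → β) (s : α) : V → L :=
  fun y => ⨅ x, I s (R x y)

theorem antitone_supInference [Preorder α] [CompleteLattice L] {I : α → β → L}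
    (hI : ∀ y, Antitone fun s => I s y) (R : U → V → β) : Antitone (supInference I R) :=
  fun _ _ hst y => iSup_mono fun x => hI (R x y) hst

theorem antitone_infInference [Preorder α] [CompleteLattice L] {I : α → β → L}
    (hI : ∀ y, Antitone fun s => I s y) (R : U → V → β) : Antitone (infInference I R) :=
  fun _ _ hst y => iInf_mono fun x => hI (R x y) hst

theorem le_supInference [CompleteLattice L] {I : α → L → L} (hI : ∀ s y, y ≤ I s y)
    {R : U → V → L} {B : V → L} {x₀ : U} (hB : B ≤ R x₀) (s : α) : B ≤ supInference I R s :=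
  fun y => le_iSup_of_le x₀ ((hB y).trans (hI s (R x₀ y)))

theorem le_infInference [CompleteLattice L] {I : α → L → L} (hI : ∀ s y, y ≤ I s y)
    {R : U → V → L} {B : V → L} (hB : ∀ x, B ≤ R x) (s : α) : B ≤ infInference I R s :=
  fun y => le_iInf fun x => (hB x y).trans (hI s (R x y))

theorem le_apply_of_antitone_of_isTop [Preorder α] [Preorder β] {I : α → β → β} {e : α}
    (hI : ∀ y, Antitone fun s => I s y) (he : IsTop e) (hIe : ∀ y, I e y = y) (s : α) (y : β) :
    y ≤ I s y :=
  (hIe y).ge.trans (hI y (he s))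

end Inference

namespace SimilarityMeasure

variable {V : Type} (SV : SimilarityMeasure V) {B : V → unitInterval}

theorem antitoneOn_S_Ici : AntitoneOn (SV.S B) (Set.Ici B) :=
  fun C hBC C' _ hCC' => (SV.le_min B C C' hBC hCC').trans (min_le_left _ _)

theorem monotone_S_comp_of_antitone {α : Type*} [Preorder α] {f : α → V → unitInterval}
    (hf : Antitone f) (hB : ∀ s, B ≤ f s) : Monotone fun s => SV.S B (f s) :=
  fun s t hst => SV.antitoneOn_S_Ici (hB t) (hB s) (hf hst)

end SimilarityMeasure

theorem stmt13_general {U : Type*} {V : Type} (SV : SimilarityMeasure V)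
    {Imp : unitInterval → unitInterval → unitInterval}
    (hImp : ∀ y : unitInterval, Antitone fun x => Imp x y)
    (hNP : ∀ y : unitInterval, Imp 1 y = y)
    {A : unitInterval → unitInterval → unitInterval} (hneut : ∀ x : unitInterval, A 1 x = x)
    {D : U → unitInterval} (hD : ∃ x₀ : U, D x₀ = 1) (B : V → unitInterval) :
    (Monotone fun s : unitInterval => SV.S B fun y => ⨆ x : U, Imp s (A (D x) (B y)))
    ∧ Monotone fun s : unitInterval => SV.S B fun y => ⨅ x : U, Imp s (Imp (D x) (B y)) := by
  have le_Imp : ∀ s y, y ≤ Imp s y :=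
    le_apply_of_antitone_of_isTop hImp (fun _ => unitInterval.le_one') hNP
  obtain ⟨x₀, hx₀⟩ := hD
  have le_A : B ≤ fun y => A (D x₀) (B y) := by simp only [hx₀, hneut, le_refl]
  exact ⟨SV.monotone_S_comp_of_antitone (antitone_supInference hImp fun x y => A (D x) (B y))
      (le_supInference le_Imp le_A),
    SV.monotone_S_comp_of_antitone (antitone_infInference hImp fun x y => Imp (D x) (B y))
      (le_infInference le_Imp fun x y => le_Imp (D x) (B y))⟩

/-- Lemma 5.2: if `I` is right-continuous in the second variable and satisfies (NP) and
`A` has left neutral element `1`, then the similarity-based methods producing `B'_1`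
and `B'_2` satisfy (GMP2'): if `S(D,D') ≤ S(D,D'')` then `S(B,B'_1) ≤ S(B,B''_1)` and
`S(B,B'_2) ≤ S(B,B''_2)`. -/
theorem stmt13 (U V : Type) [Nonempty U] [Nonempty V]
    (SU : SimilarityMeasure U) (SV : SimilarityMeasure V)
    (Imp : unitInterval → unitInterval → unitInterval)
    (hImono₁ : ∀ y : unitInterval, Antitone fun x => Imp x y)
    (hImono₂ : ∀ x : unitInterval, Monotone (Imp x))
    (hI00 : Imp 0 0 = 1) (hI11 : Imp 1 1 = 1) (hI10 : Imp 1 0 = 0)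
    (hrc : ∀ (x z : unitInterval), z ≠ 1 → ContinuousWithinAt (Imp x) (Set.Ioi z) z)
    (hNP : ∀ y : unitInterval, Imp 1 y = y)
    (A : unitInterval → unitInterval → unitInterval)
    (hAmono₁ : ∀ y : unitInterval, Monotone fun x => A x y)
    (hAmono₂ : ∀ x : unitInterval, Monotone (A x))
    (hA00 : A 0 0 = 0) (hA11 : A 1 1 = 1)
    (hneut : ∀ x : unitInterval, A 1 x = x)
    (D : U → unitInterval) (hD : ∃ x₀ : U, D x₀ = 1)
    (B : V → unitInterval)
    (D' D'' : U → unitInterval) (hS : SU.S D D' ≤ SU.S D D'') :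
    SV.S B (fun y => ⨆ x : U, Imp (SU.S D D') (A (D x) (B y)))
      ≤ SV.S B (fun y => ⨆ x : U, Imp (SU.S D D'') (A (D x) (B y)))
    ∧ SV.S B (fun y => ⨅ x : U, Imp (SU.S D D') (Imp (D x) (B y)))
      ≤ SV.S B (fun y => ⨅ x : U, Imp (SU.S D D'') (Imp (D x) (B y))) := by
  obtain ⟨monotone_sup, monotone_inf⟩ := stmt13_general SV hImono₁ hNP hneut hD B
  exact ⟨monotone_sup hS, monotone_inf hS⟩
end

section
/- Let U, V be nonempty sets, let A : [0,1]² → [0,1] be a binary aggregation function having 0 as a neutral element (A(0,x) = A(x,0) = x for all x ∈ [0,1]), let D be a normal fuzzy set on U with complement D^C(x) = 1 − D(x), let B be a fuzzy set on V, and let s ∈ [0,1] be a value with s = 0 (corresponding to the assumption S(D, D^C) = 0 for a similarity measure S). Then the inferred conclusion B'_3(y) = sup_{x ∈ U} A(s, A(D(x), B(y))) satisfies B'_3(y) = 1 for all y ∈ V. -/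
/-!
Neutrality of `⊥` gives `A ⊥ ⊤ = A ⊤ ⊥ = ⊤`, and monotonicity then makes `⊤` absorbing on both
sides. Hence at a point `x₀` with `D x₀ = ⊤` the term `A s (A ⊤ (B y)) = A s ⊤ = ⊤` already
attains the supremum.
-/

theorem apply_eq_top_of_apply_bot_eq_top {α β : Type*} [Preorder α] [OrderBot α]
    [PartialOrder β] [OrderTop β] {f : α → β} (hf : Monotone f) (hbot : f ⊥ = ⊤) (x : α) :
    f x = ⊤ :=
  eq_top_mono (hf bot_le) hbot

theorem stmt14_general {U V : Sort*} {L : Type*} [CompleteLattice L] {A : L → L → L}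
    (hmono_left : Monotone fun a => A a ⊤) (hmono_right : Monotone (A ⊤))
    (hbot_top : A ⊥ ⊤ = ⊤) (htop_bot : A ⊤ ⊥ = ⊤)
    {D : U → L} (hD : ∃ x₀, D x₀ = ⊤) (B : V → L) (s : L) (y : V) :
    ⨆ x, A s (A (D x) (B y)) = ⊤ := by
  obtain ⟨x₀, hx₀⟩ := hD
  have hterm : A s (A (D x₀) (B y)) = ⊤ := calc
    A s (A (D x₀) (B y)) = A s (A ⊤ (B y)) := by rw [hx₀]
    _ = A s ⊤ := by rw [apply_eq_top_of_apply_bot_eq_top hmono_right htop_bot]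
    _ = ⊤ := apply_eq_top_of_apply_bot_eq_top hmono_left hbot_top s
  exact eq_top_mono (le_iSup (fun x => A s (A (D x) (B y))) x₀) hterm

/-- Lemma 5.5: let `A` be an aggregation function having `0` as a neutral element and
let `D` be normal.  With `s = 0` (the similarity `S(D, D^C) = 0`), the inferred
conclusion `B'_3(y) = sup_x A(s, A(D(x), B(y)))` equals `1` everywhere, i.e. the
`B'_3` method satisfies (GMP3). -/
theorem stmt14 (U V : Type) [Nonempty U] [Nonempty V]
    (A : unitInterval → unitInterval → unitInterval)
    (hAmono₁ : ∀ y : unitInterval, Monotone fun x => A x y)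
    (hAmono₂ : ∀ x : unitInterval, Monotone (A x))
    (hA00 : A 0 0 = 0) (hA11 : A 1 1 = 1)
    (hneut : ∀ x : unitInterval, A 0 x = x ∧ A x 0 = x)
    (D : U → unitInterval) (hD : ∃ x₀ : U, D x₀ = 1)
    (B : V → unitInterval)
    (s : unitInterval) (hs : s = 0) :
    ∀ y : V, (⨆ x : U, A s (A (D x) (B y))) = 1 :=
  stmt14_general (hAmono₁ 1) (hAmono₂ 1) (hneut 1).1 (hneut 1).2 hD B s
end

section
/- Let U, V be nonempty sets, S a similarity measure on U, A : [0,1]² → [0,1] a binary aggregation function having 1 as a left neutral element (A(1,x) = x for all x), and I a fuzzy implication satisfying (NP) (I(1,y) = y for all y). Let D be a normal fuzzy set on U and B a fuzzy set on V. Then with D' = D the inferred conclusion satisfies B'_1(y) = sup_{x ∈ U} I(S(D,D), A(D(x), B(y))) = B(y) for all y ∈ V. -/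
/-- An `L`-valued fuzzy set is normal if it takes the value `⊤`, which is `1` for the unit interval;
truth values are taken in an arbitrary order with a greatest element. -/
def IsNormalFuzzySet {U L : Type*} [LE L] [OrderTop L] (D : U → L) : Prop :=
  ∃ x₀, D x₀ = ⊤

/-- The conclusion `B'₁` that similarity-based approximate reasoning infers from the rule
`D → B` and the input `D'`, with truth values in a complete lattice. The similarity of `D'` and `D`
is a bare function `S`, so that reflexivity can be asked for at a single fuzzy set. -/
def similarityConclusion {U V L : Type*} [CompleteLattice L] (S : (U → L) → (U → L) → L)
    (A Imp : L → L → L) (D : U → L) (B : V → L) (D' : U → L) : V → L :=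
  fun y => ⨆ x, Imp (S D D') (A (D x) (B y))

lemma IsNormalFuzzySet.isGreatest_range_comp {U L M : Type*} [Preorder L] [OrderTop L] [Preorder M]
    {D : U → L} (hD : IsNormalFuzzySet D) {g : L → M} (hg : Monotone g) :
    IsGreatest (Set.range fun x => g (D x)) (g ⊤) := by
  obtain ⟨x₀, hx₀⟩ := hD
  exact ⟨⟨x₀, congrArg g hx₀⟩, Set.forall_mem_range.2 fun _ => hg le_top⟩

lemma similarityConclusion_of_eq_top {U V L : Type*} [CompleteLattice L]
    {S : (U → L) → (U → L) → L} {A Imp : L → L → L} (hNP : ∀ y, Imp ⊤ y = y)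
    {D D' : U → L} (hS : S D D' = ⊤) (B : V → L) (y : V) :
    similarityConclusion S A Imp D B D' y = ⨆ x, A (D x) (B y) := by
  simp only [similarityConclusion, hS, hNP]

theorem stmt15_general {U V L : Type*} [CompleteLattice L] {S : (U → L) → (U → L) → L}
    {A Imp : L → L → L} (hA : ∀ y, Monotone fun x => A x y) (hneut : ∀ y, A ⊤ y = y)
    (hNP : ∀ y, Imp ⊤ y = y) {D : U → L} (hD : IsNormalFuzzySet D) (hS : S D D = ⊤) (B : V → L) :
    similarityConclusion S A Imp D B D = B := by
  funext y
  calc similarityConclusion S A Imp D B D y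
      = ⨆ x, A (D x) (B y) := similarityConclusion_of_eq_top hNP hS B y
    _ = A ⊤ (B y) := (hD.isGreatest_range_comp (hA (B y))).csSup_eq
    _ = B y := hneut (B y)

/-- Lemma 5.6: if `A` has left neutral element `1`, `I` satisfies (NP) and `D` is
normal, then with `D' = D` the conclusion `B'_1(y) = sup_x I(S(D,D), A(D(x),B(y)))`
equals `B(y)`, i.e. the `B'_1` method satisfies (GMP4). -/
theorem stmt15 (U V : Type) [Nonempty U] [Nonempty V] (S : SimilarityMeasure U)
    (A : unitInterval → unitInterval → unitInterval)
    (hAmono₁ : ∀ y : unitInterval, Monotone fun x => A x y)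
    (hAmono₂ : ∀ x : unitInterval, Monotone (A x))
    (hA00 : A 0 0 = 0) (hA11 : A 1 1 = 1)
    (hneut : ∀ x : unitInterval, A 1 x = x)
    (Imp : unitInterval → unitInterval → unitInterval)
    (hImono₁ : ∀ y : unitInterval, Antitone fun x => Imp x y)
    (hImono₂ : ∀ x : unitInterval, Monotone (Imp x))
    (hI00 : Imp 0 0 = 1) (hI11 : Imp 1 1 = 1) (hI10 : Imp 1 0 = 0)
    (hNP : ∀ y : unitInterval, Imp 1 y = y)
    (D : U → unitInterval) (hD : ∃ x₀ : U, D x₀ = 1)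
    (B : V → unitInterval) :
    ∀ y : V, (⨆ x : U, Imp (S.S D D) (A (D x) (B y))) = B y :=
  congrFun (stmt15_general hAmono₁ hneut hNP hD ((S.eq_one_iff D D).2 rfl) B)
end

section
/- Let U, V be nonempty sets, S a similarity measure on U, and I a fuzzy implication that is right-continuous in its second variable and satisfies (NP) (I(1,y) = y for all y). Let D be a normal fuzzy set on U and B a fuzzy set on V. Then with D' = D the inferred conclusion satisfies B'_2(y) = inf_{x ∈ U} I(S(D,D), I(D(x), B(y))) = B(y) for all y ∈ V. -/
theorem SimilarityMeasure.apply_self {U : Type} (S : SimilarityMeasure U)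
    (D : U → unitInterval) : S.S D D = 1 :=
  (S.eq_one_iff D D).2 rfl

theorem isLeast_range_comp_of_antitone {ι α β : Type*} [Preorder α] [OrderTop α] [Preorder β]
    {f : α → β} (hf : Antitone f) {D : ι → α} (hD : ∃ i, D i = ⊤) :
    IsLeast (Set.range fun i => f (D i)) (f ⊤) := by
  obtain ⟨i₀, hi₀⟩ := hD
  refine ⟨⟨i₀, congrArg f hi₀⟩, ?_⟩
  rintro _ ⟨i, rfl⟩
  exact hf le_top

theorem iInf_comp_eq_apply_top_of_antitone {ι α β : Type*} [Preorder α] [OrderTop α]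
    [ConditionallyCompleteLattice β] {f : α → β} (hf : Antitone f) {D : ι → α}
    (hD : ∃ i, D i = ⊤) : ⨅ i, f (D i) = f ⊤ :=
  (isLeast_range_comp_of_antitone hf hD).csInf_eq

theorem stmt16_general {U V α β : Type*} [Preorder α] [OrderTop α]
    [ConditionallyCompleteLattice β] {S : (U → α) → (U → α) → α} (hS : ∀ D, S D D = ⊤)
    {Imp : α → β → β} (hImono₁ : ∀ y, Antitone fun x => Imp x y) (hNP : ∀ y, Imp ⊤ y = y)
    {D : U → α} (hD : ∃ x₀, D x₀ = ⊤) (B : V → β) (y : V) :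
    ⨅ x, Imp (S D D) (Imp (D x) (B y)) = B y :=
  calc ⨅ x, Imp (S D D) (Imp (D x) (B y))
      = ⨅ x, Imp (D x) (B y) := by simp only [hS, hNP]
    _ = Imp ⊤ (B y) := iInf_comp_eq_apply_top_of_antitone (hImono₁ (B y)) hD
    _ = B y := hNP (B y)

/-- Lemma 5.7: if `I` is right-continuous in its second variable, satisfies (NP) and
`D` is normal, then with `D' = D` the conclusion
`B'_2(y) = inf_x I(S(D,D), I(D(x),B(y)))` equals `B(y)`, i.e. the `B'_2` method
satisfies (GMP4). -/
theorem stmt16 (U V : Type) [Nonempty U] [Nonempty V] (S : SimilarityMeasure U)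
    (Imp : unitInterval → unitInterval → unitInterval)
    (hImono₁ : ∀ y : unitInterval, Antitone fun x => Imp x y)
    (hImono₂ : ∀ x : unitInterval, Monotone (Imp x))
    (hI00 : Imp 0 0 = 1) (hI11 : Imp 1 1 = 1) (hI10 : Imp 1 0 = 0)
    (hrc : ∀ (x z : unitInterval), z ≠ 1 → ContinuousWithinAt (Imp x) (Set.Ioi z) z)
    (hNP : ∀ y : unitInterval, Imp 1 y = y)
    (D : U → unitInterval) (hD : ∃ x₀ : U, D x₀ = 1)
    (B : V → unitInterval) :
    ∀ y : V, (⨅ x : U, Imp (S.S D D) (Imp (D x) (B y))) = B y :=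
  stmt16_general S.apply_self hImono₁ hNP hD B
end

section
/- Let I : [0,1]² → [0,1] be a fuzzy implication that is right-continuous in its second variable and satisfies I(1,y) < 1 for all y ∈ [0,1), and let A_I(x,y) = inf{z ∈ [0,1] : I(x,z) ≥ y}. Let U, V be nonempty sets, D, D' fuzzy sets on U and B a fuzzy set on V. For a fuzzy set C on V define the quintuple-implication expression M_C(x,y) = I(I(D(x),B(y)), I(I(D'(x),D(x)), I(D'(x),C(y)))). Define B'(y) = sup_{x ∈ U} A_I(D'(x), A_I(I(D'(x),D(x)), A_I(I(D(x),B(y)), 1))). Then B' is the quintuple implication principle (QIP) solution of the fuzzy modus ponens problem: (a) M_{B'}(x,y) = 1 for all x ∈ U, y ∈ V; (b) for every fuzzy set C on V such that M_C(x,y) = 1 for all x ∈ U, y ∈ V, one has B' ⊆ C, i.e., B'(y) ≤ C(y) for all y ∈ V. -/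
/-- The residual operation of `Imp` in its second variable, which is `coresid` in an arbitrary
order: the candidate for the lower adjoint of each `Imp x`. -/
def lowerResiduum {α β γ : Type*} [InfSet β] [LE γ] (Imp : α → β → γ) (x : α) (y : γ) : β :=
  sInf {z | y ≤ Imp x z}

theorem gc_lowerResiduum {α β γ : Type*} [CompleteLattice β] [Preorder γ] [OrderTop γ]
    {Imp : α → β → γ} {x : α} (hcont : RightOrdContinuous (Imp x)) (htop : Imp x ⊤ = ⊤) :
    GaloisConnection (lowerResiduum Imp x) (Imp x) := by
  intro y z
  refine ⟨fun hz => ?_, fun hy => sInf_le hy⟩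
  have hne : {z | y ≤ Imp x z}.Nonempty := ⟨⊤, le_top.trans_eq htop.symm⟩
  have attained : y ≤ Imp x (lowerResiduum Imp x y) :=
    (le_isGLB_iff (hcont hne (isGLB_sInf _))).2 (Set.forall_mem_image.2 fun _ hw => hw)
  exact attained.trans (hcont.mono hz)

theorem rightOrdContinuous_of_continuousWithinAt_Ioi_s18 {α β : Type*}
    [LinearOrder α] [OrderTop α] [TopologicalSpace α] [OrderTopology α]
    [LinearOrder β] [TopologicalSpace β] [OrderTopology β] {f : α → β} (hf : Monotone f)
    (hcont : ∀ z, z ≠ ⊤ → ContinuousWithinAt f (Set.Ioi z) z) : RightOrdContinuous f := by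
  refine hf.rightOrdContinuous fun z => continuousWithinAt_Ioi_iff_Ici.1 ?_
  rcases eq_or_ne z ⊤ with rfl | hz
  · simp only [ContinuousWithinAt, Set.Ioi_top, nhdsWithin_empty, Filter.tendsto_bot]
  · exact hcont z hz

section QuintupleImplication

variable {L U V : Type*}

/-- The quintuple implication expression `M_C(x, y)` of fuzzy modus ponens. -/
def quintupleImp (Imp : L → L → L) (D D' : U → L) (B C : V → L) (x : U) (y : V) : L :=
  Imp (Imp (D x) (B y)) (Imp (Imp (D' x) (D x)) (Imp (D' x) (C y)))

/-- The least value of `C y` allowed by the single equation `M_C(x, y) = ⊤`. -/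
def qipBound [InfSet L] [LE L] [Top L] (Imp : L → L → L) (D D' : U → L) (B : V → L)
    (x : U) (y : V) : L :=
  lowerResiduum Imp (D' x) (lowerResiduum Imp (Imp (D' x) (D x))
    (lowerResiduum Imp (Imp (D x) (B y)) ⊤))

/-- The fuzzy set `B'` on `V`, the candidate QIP solution of fuzzy modus ponens. -/
def qipSolution [CompleteLattice L] (Imp : L → L → L) (D D' : U → L) (B : V → L) (y : V) : L :=
  ⨆ x, qipBound Imp D D' B x y

theorem quintupleImp_eq_top_iff [CompleteLattice L] {Imp : L → L → L}
    (gc : ∀ a, GaloisConnection (lowerResiduum Imp a) (Imp a))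
    (D D' : U → L) (B C : V → L) (x : U) (y : V) :
    quintupleImp Imp D D' B C x y = ⊤ ↔ qipBound Imp D D' B x y ≤ C y := by
  rw [quintupleImp, qipBound, ← top_le_iff, ← gc _ _ _, ← gc _ _ _, ← gc _ _ _]

theorem stmt18_general [CompleteLattice L] {Imp : L → L → L}
    (hcont : ∀ a, RightOrdContinuous (Imp a)) (htop : ∀ a, Imp a ⊤ = ⊤)
    (D D' : U → L) (B : V → L) :
    IsLeast {C : V → L | ∀ x y, quintupleImp Imp D D' B C x y = ⊤} (qipSolution Imp D D' B) := by
  have eq_top_iff := quintupleImp_eq_top_iff (fun a => gc_lowerResiduum (hcont a) (htop a)) D D' B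
  constructor
  · intro x y
    exact (eq_top_iff ..).2 (le_iSup (fun x' => qipBound Imp D D' B x' y) x)
  · intro C hC y
    exact iSup_le fun x => (eq_top_iff ..).1 (hC x y)

end QuintupleImplication

/-- Theorem 6.1 (FMP case): let `I` be a fuzzy implication, right-continuous in its
second variable, with `I(1,y) < 1` for all `y < 1`.  Then
`B'(y) = sup_x A_I(D'(x), A_I(I(D'(x),D(x)), A_I(I(D(x),B(y)), 1)))`
is the QIP solution of the FMP problem: the quintuple implication expression attains
the value `1` everywhere at `B'`, and `B'` is the smallest fuzzy set on `V` with this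
property. -/
theorem stmt18 (Imp : unitInterval → unitInterval → unitInterval)
    (hImono₁ : ∀ y : unitInterval, Antitone fun x => Imp x y)
    (hImono₂ : ∀ x : unitInterval, Monotone (Imp x))
    (hI00 : Imp 0 0 = 1) (hI11 : Imp 1 1 = 1) (hI10 : Imp 1 0 = 0)
    (hrc : ∀ (x z : unitInterval), z ≠ 1 → ContinuousWithinAt (Imp x) (Set.Ioi z) z)
    (hlt : ∀ y : unitInterval, y < 1 → Imp 1 y < 1)
    (U V : Type) [Nonempty U] [Nonempty V]
    (D D' : U → unitInterval) (B : V → unitInterval) :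
    -- (a) the quintuple implication expression attains its maximum 1 at `B'`
    (∀ (x : U) (y : V),
      Imp (Imp (D x) (B y)) (Imp (Imp (D' x) (D x)) (Imp (D' x)
        (⨆ x' : U, coresid Imp (D' x') (coresid Imp (Imp (D' x') (D x'))
          (coresid Imp (Imp (D x') (B y)) 1))))) = 1)
    -- (b) `B'` is the smallest such fuzzy set
    ∧ (∀ C : V → unitInterval,
      (∀ (x : U) (y : V),
        Imp (Imp (D x) (B y)) (Imp (Imp (D' x) (D x)) (Imp (D' x) (C y))) = 1) →
      ∀ y : V,
        (⨆ x : U, coresid Imp (D' x) (coresid Imp (Imp (D' x) (D x))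
          (coresid Imp (Imp (D x) (B y)) 1))) ≤ C y) := by
  have hB' := stmt18_general
    (fun x => rightOrdContinuous_of_continuousWithinAt_Ioi_s18 (hImono₂ x) (hrc x))
    (fun x => top_le_iff.1 (hI11.ge.trans (hImono₁ 1 le_top))) D D' B
  exact ⟨hB'.1, fun _ hC => hB'.2 hC⟩
end
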